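/- (Return gap from accumulated model error, same policy.) Let P and P̂ be two dynamics, π a policy, and for t ≥ 1 set ε_t^m := E_{(s,a)∼ν_{t-1}^{π,P̂}}[D_TV(P̂(·|s,a), P(·|s,a))]. Then the gap between the return of π under the model and under the true dynamics satisfies |J_{P̂}(π) − J_P(π)| ≤ (2·R_max/(1−γ))·Σ_{t=1}^∞ γ^t·ε_t^m. -/

import Mathlib

open scoped ENNReal

noncomputable section

/-- Total variation distance between two probability mass functions on a countable type:
`D_TV(p, q) = (1/2) * Σ_x |p(x) - q(x)|`. -/
def tv {X : Type*} (p q : PMF X) : ℝ :=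
  (1 / 2) * ∑' x : X, |(p x).toReal - (q x).toReal|

/-- The state-action distribution at time `t` under initial distribution `ρ0`, policy `π`
and dynamics `P`:  `ν_0(s,a) = ρ0(s)·π(a|s)` and
`ν_{t+1}(s',a') = Σ_{s,a} ν_t(s,a)·P(s'|s,a)·π(a'|s')`. -/
def nu {S A : Type*} (ρ0 : PMF S) (π : S → PMF A) (P : S × A → PMF S) : ℕ → PMF (S × A)
  | 0 => ρ0.bind fun s => (π s).map fun a => (s, a)
  | (t + 1) => (nu ρ0 π P t).bind fun sa =>
      (P sa).bind fun s' => (π s').map fun a' => (s', a')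

/-- The discounted return `J_P(π) = Σ_{t=0}^∞ γ^t · E_{(s,a)∼ν_t^{π,P}}[R(s,a)]`. -/
def J {S A : Type*} (R : S × A → ℝ) (γ : ℝ) (ρ0 : PMF S) (π : S → PMF A)
    (P : S × A → PMF S) : ℝ :=
  ∑' t : ℕ, γ ^ t * ∑' sa : S × A, ((nu ρ0 π P t) sa).toReal * R sa

/-!
One step of the two dynamics increases the total variation distance `d_t` between their state-action
distributions by at most the expected model error `ε_{t+1}`: change the kernel first, under the
model's own `ν_t`, and then the law it is applied to, where the distance is at most `d_t` by data
processing.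
Multiplying `d_{t+1} ≤ d_t + ε_{t+1}` by `γ^{t+1}` and summing gives
`(1 - γ) Σ γ^t d_t ≤ Σ γ^{t+1} ε_{t+1}`, since `d_0 = 0`; and two expectations of a function bounded
by `R_max` differ by at most `2 R_max` times the total variation distance of the laws.
-/

section Summability

variable {ι X Y E : Type*} {w f : ι → ℝ} {C : ℝ}

lemma summable_mul_of_abs_le (hw : Summable w) (hf : ∀ i, |f i| ≤ C) :
    Summable fun i => w i * f i := by
  refine .of_norm_bounded (hw.abs.mul_right C) fun i => ?_
  rw [Real.norm_eq_abs, abs_mul]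
  gcongr
  exact hf i

lemma summable_pow_mul_of_abs_le {γ : ℝ} (hγ0 : 0 ≤ γ) (hγ1 : γ < 1) {f : ℕ → ℝ}
    (hf : ∀ t, |f t| ≤ C) : Summable fun t => γ ^ t * f t :=
  summable_mul_of_abs_le (summable_geometric_of_lt_one hγ0 hγ1) hf

lemma abs_tsum_mul_le (hw : Summable w) (hf : ∀ i, |f i| ≤ C) :
    |∑' i, w i * f i| ≤ C * ∑' i, |w i| := by
  rw [← Real.norm_eq_abs]
  refine tsum_of_norm_bounded (hw.abs.hasSum.mul_left C) fun i => ?_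
  rw [Real.norm_eq_abs, abs_mul, mul_comm]
  gcongr
  exact hf i

lemma tsum_norm_tsum_le_tsum_tsum_norm [SeminormedAddCommGroup E] {F : X → Y → E}
    (hF : Summable fun z : X × Y => ‖F z.1 z.2‖) :
    ∑' y, ‖∑' x, F x y‖ ≤ ∑' x, ∑' y, ‖F x y‖ := by
  have hswap : Summable fun z : Y × X => ‖F z.2 z.1‖ := hF.prod_symm
  have hrow (y : Y) : ‖∑' x, F x y‖ ≤ ∑' x, ‖F x y‖ :=
    norm_tsum_le_tsum_norm (hswap.prod_factor y)
  calc ∑' y, ‖∑' x, F x y‖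
      ≤ ∑' y, ∑' x, ‖F x y‖ :=
        (hswap.prod.of_nonneg_of_le (fun _ => norm_nonneg _) hrow).tsum_le_tsum hrow hswap.prod
    _ = ∑' x, ∑' y, ‖F x y‖ := hF.tsum_comm

lemma one_sub_mul_tsum_pow_mul_le_of_succ_le_add {γ : ℝ} {d e : ℕ → ℝ} (hγ : 0 ≤ γ)
    (hd : Summable fun t => γ ^ t * d t) (he : Summable fun t => γ ^ t * e t)
    (hstep : ∀ t, d (t + 1) ≤ d t + e t) :
    (1 - γ) * ∑' t, γ ^ t * d t ≤ d 0 + ∑' t, γ ^ (t + 1) * e t := by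
  have hshift : ∑' t, γ ^ t * d t = d 0 + ∑' t, γ ^ (t + 1) * d (t + 1) := by
    simpa using hd.tsum_eq_zero_add
  have hrhs : HasSum (fun t => γ ^ (t + 1) * (d t + e t))
      (γ * (∑' t, γ ^ t * d t) + γ * ∑' t, γ ^ t * e t) := by
    simpa only [pow_succ', mul_assoc, mul_add]
      using (hd.hasSum.mul_left γ).add (he.hasSum.mul_left γ)
  have htail : ∑' t, γ ^ (t + 1) * d (t + 1) ≤
      γ * (∑' t, γ ^ t * d t) + γ * ∑' t, γ ^ t * e t :=
    hasSum_le (fun t => by gcongr; exact hstep t) ((summable_nat_add_iff 1).mpr hd).hasSum hrhs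
  simp only [pow_succ', mul_assoc, tsum_mul_left] at hshift htail ⊢
  linarith

end Summability

section TotalVariation

variable {X Y : Type*} {C : ℝ}

/-- The expectation `E_{x∼p}[f x]` of a real-valued function, as a sum over all points. It takes
the junk value `0` when the sum does not converge absolutely. -/
def expect (p : PMF X) (f : X → ℝ) : ℝ :=
  ∑' x, (p x).toReal * f x

lemma hasSum_pmf_toReal (p : PMF X) : HasSum (fun x => (p x).toReal) 1 := by
  simpa [← ENNReal.tsum_toReal_eq p.apply_ne_top] using
    (ENNReal.summable_toReal p.tsum_coe_ne_top).hasSum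

lemma summable_pmf_toReal_sub (p q : PMF X) :
    Summable fun x => (p x).toReal - (q x).toReal :=
  (hasSum_pmf_toReal p).summable.sub (hasSum_pmf_toReal q).summable

lemma summable_mul_pmf_toReal {w : X → ℝ} (hw : Summable w) (f : X → PMF Y) :
    Summable fun z : X × Y => w z.1 * (f z.1 z.2).toReal := by
  have hrow (x : X) : HasSum (fun y => |w x| * (f x y).toReal) |w x| := by
    simpa only [mul_one] using (hasSum_pmf_toReal (f x)).mul_left |w x|
  have habs : Summable fun z : X × Y => |w z.1| * (f z.1 z.2).toReal := by
    rw [summable_prod_of_nonneg fun z => mul_nonneg (abs_nonneg _) ENNReal.toReal_nonneg]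
    refine ⟨fun x => (hrow x).summable, ?_⟩
    simpa only [(hrow _).tsum_eq] using hw.abs
  refine .of_norm ?_
  simpa only [norm_mul, Real.norm_eq_abs, ENNReal.abs_toReal] using habs

lemma hasSum_bind_toReal (p : PMF X) (f : X → PMF Y) (y : Y) :
    HasSum (fun x => (p x).toReal * (f x y).toReal) (p.bind f y).toReal := by
  have hsum := (summable_mul_pmf_toReal (hasSum_pmf_toReal p).summable f).prod_symm.prod_factor y
  have hbind : (p.bind f y).toReal = ∑' x, (p x).toReal * (f x y).toReal := by
    rw [PMF.bind_apply, ENNReal.tsum_toReal_eq fun x =>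
      ENNReal.mul_ne_top (p.apply_ne_top x) ((f x).apply_ne_top y)]
    simp only [ENNReal.toReal_mul]
  exact hbind ▸ hsum.hasSum

lemma summable_expect (p : PMF X) {f : X → ℝ} (hf : ∀ x, |f x| ≤ C) :
    Summable fun x => (p x).toReal * f x :=
  summable_mul_of_abs_le (hasSum_pmf_toReal p).summable hf

lemma abs_expect_le (p : PMF X) {f : X → ℝ} (hf : ∀ x, |f x| ≤ C) : |expect p f| ≤ C := by
  simpa [expect, (hasSum_pmf_toReal p).tsum_eq] using
    abs_tsum_mul_le (hasSum_pmf_toReal p).summable hf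

lemma expect_mono (p : PMF X) {D : ℝ} {f g : X → ℝ} (hf : ∀ x, |f x| ≤ C)
    (hg : ∀ x, |g x| ≤ D) (hfg : ∀ x, f x ≤ g x) : expect p f ≤ expect p g :=
  (summable_expect p hf).tsum_le_tsum
    (fun x => mul_le_mul_of_nonneg_left (hfg x) ENNReal.toReal_nonneg) (summable_expect p hg)

lemma two_mul_tv (p q : PMF X) : 2 * tv p q = ∑' x, |(p x).toReal - (q x).toReal| := by
  simp [tv]

lemma tv_self (p : PMF X) : tv p p = 0 := by
  simp [tv]

lemma tv_nonneg (p q : PMF X) : 0 ≤ tv p q :=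
  mul_nonneg (by norm_num) (tsum_nonneg fun _ => abs_nonneg _)

lemma tv_le_one (p q : PMF X) : tv p q ≤ 1 := by
  have hsum := (hasSum_pmf_toReal p).add (hasSum_pmf_toReal q)
  have hle : 2 * tv p q ≤ 1 + 1 := by
    rw [two_mul_tv]
    refine hasSum_le (fun x => ?_) (summable_pmf_toReal_sub p q).abs.hasSum hsum
    simpa using abs_sub (p x).toReal (q x).toReal
  linarith

lemma abs_tv_le_one (p q : PMF X) : |tv p q| ≤ 1 := by
  rw [abs_of_nonneg (tv_nonneg p q)]
  exact tv_le_one p q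

lemma tv_triangle (p q r : PMF X) : tv p r ≤ tv p q + tv q r := by
  have hpq := (summable_pmf_toReal_sub p q).abs
  have hqr := (summable_pmf_toReal_sub q r).abs
  have hle : 2 * tv p r ≤ 2 * tv p q + 2 * tv q r := by
    simp only [two_mul_tv]
    exact hasSum_le (fun x => abs_sub_le _ _ _) (summable_pmf_toReal_sub p r).abs.hasSum
      (hpq.hasSum.add hqr.hasSum)
  linarith

lemma abs_expect_sub_expect_le (p q : PMF X) {f : X → ℝ} (hf : ∀ x, |f x| ≤ C) :
    |expect p f - expect q f| ≤ 2 * C * tv p q := by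
  have hbound := abs_tsum_mul_le (summable_pmf_toReal_sub p q) hf
  simp only [sub_mul, (summable_expect p hf).tsum_sub (summable_expect q hf)] at hbound
  calc |expect p f - expect q f|
      ≤ C * ∑' x, |(p x).toReal - (q x).toReal| := hbound
    _ = 2 * C * tv p q := by rw [← two_mul_tv]; ring

lemma two_mul_tv_le_of_hasSum {p q : PMF Y} {F : X → Y → ℝ}
    (hF : Summable fun z : X × Y => F z.1 z.2)
    (hpq : ∀ y, HasSum (fun x => F x y) ((p y).toReal - (q y).toReal)) :
    2 * tv p q ≤ ∑' x, ∑' y, |F x y| := by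
  have hle := tsum_norm_tsum_le_tsum_tsum_norm hF.norm
  simpa only [two_mul_tv, Real.norm_eq_abs, (hpq _).tsum_eq] using hle

lemma tv_bind_bind_le_expect_tv (p : PMF X) (f g : X → PMF Y) :
    tv (p.bind f) (p.bind g) ≤ expect p fun x => tv (f x) (g x) := by
  have hp := (hasSum_pmf_toReal p).summable
  have hle := two_mul_tv_le_of_hasSum
    (F := fun x y => (p x).toReal * (f x y).toReal - (p x).toReal * (g x y).toReal)
    ((summable_mul_pmf_toReal hp f).sub (summable_mul_pmf_toReal hp g))
    fun y => (hasSum_bind_toReal p f y).sub (hasSum_bind_toReal p g y)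
  have hrow (x : X) :
      ∑' y, |(p x).toReal * (f x y).toReal - (p x).toReal * (g x y).toReal| =
        2 * ((p x).toReal * tv (f x) (g x)) := by
    simp only [← mul_sub, abs_mul, ENNReal.abs_toReal, tsum_mul_left, ← two_mul_tv,
      mul_left_comm _ (2 : ℝ)]
  simp only [hrow, tsum_mul_left] at hle
  exact le_of_mul_le_mul_left hle two_pos

lemma tv_bind_bind_le_tv (p q : PMF X) (g : X → PMF Y) :
    tv (p.bind g) (q.bind g) ≤ tv p q := by
  have hle := two_mul_tv_le_of_hasSum
    (F := fun x y => ((p x).toReal - (q x).toReal) * (g x y).toReal)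
    (summable_mul_pmf_toReal (summable_pmf_toReal_sub p q) g)
    fun y => by
      simpa only [sub_mul] using (hasSum_bind_toReal p g y).sub (hasSum_bind_toReal q g y)
  have hrow (x : X) : ∑' y, |((p x).toReal - (q x).toReal) * (g x y).toReal| =
      |(p x).toReal - (q x).toReal| := by
    simp only [abs_mul, ENNReal.abs_toReal, tsum_mul_left, (hasSum_pmf_toReal (g x)).tsum_eq,
      mul_one]
  simp only [hrow, ← two_mul_tv] at hle
  exact le_of_mul_le_mul_left hle two_pos

lemma tv_bind_bind_le_tv_add_expect_tv (p q : PMF X) (f g : X → PMF Y) :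
    tv (p.bind f) (q.bind g) ≤ tv p q + expect p fun x => tv (f x) (g x) :=
  calc tv (p.bind f) (q.bind g)
      ≤ tv (p.bind f) (p.bind g) + tv (p.bind g) (q.bind g) := tv_triangle _ _ _
    _ ≤ (expect p fun x => tv (f x) (g x)) + tv p q :=
        add_le_add (tv_bind_bind_le_expect_tv p f g) (tv_bind_bind_le_tv p q g)
    _ = tv p q + expect p fun x => tv (f x) (g x) := add_comm _ _

end TotalVariation

section Return

variable {S A : Type*} {R : S × A → ℝ} {Rmax γ : ℝ}

/-- The expected one-step model error `E_{(s,a)∼ν_t^{π,P̂}}[D_TV(P̂(·|s,a), P(·|s,a))]`, indexed by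
the time at which the step starts, so that it is `ε_{t+1}^m` in the paper's notation. -/
def modelError (ρ0 : PMF S) (π : S → PMF A) (Phat P : S × A → PMF S) (t : ℕ) : ℝ :=
  expect (nu ρ0 π Phat t) fun sa => tv (Phat sa) (P sa)

lemma tv_nu_succ_le (ρ0 : PMF S) (π : S → PMF A) (Phat P : S × A → PMF S) (t : ℕ) :
    tv (nu ρ0 π Phat (t + 1)) (nu ρ0 π P (t + 1)) ≤
      tv (nu ρ0 π Phat t) (nu ρ0 π P t) + modelError ρ0 π Phat P t := by
  refine (tv_bind_bind_le_tv_add_expect_tv _ _ _ _).trans ?_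
  gcongr
  exact expect_mono _ (fun _ => abs_tv_le_one _ _) (fun _ => abs_tv_le_one _ _)
    fun sa => tv_bind_bind_le_tv (Phat sa) (P sa) _

lemma one_sub_mul_tsum_pow_mul_tv_nu_le (hγ0 : 0 ≤ γ) (hγ1 : γ < 1) (ρ0 : PMF S)
    (π : S → PMF A) (Phat P : S × A → PMF S) :
    (1 - γ) * ∑' t, γ ^ t * tv (nu ρ0 π Phat t) (nu ρ0 π P t) ≤
      ∑' t, γ ^ (t + 1) * modelError ρ0 π Phat P t := by
  have hbound := one_sub_mul_tsum_pow_mul_le_of_succ_le_add (e := modelError ρ0 π Phat P) hγ0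
    (summable_pow_mul_of_abs_le hγ0 hγ1 fun t => abs_tv_le_one _ _)
    (summable_pow_mul_of_abs_le hγ0 hγ1 fun t => abs_expect_le _ fun _ => abs_tv_le_one _ _)
    (tv_nu_succ_le ρ0 π Phat P)
  have hstart : tv (nu ρ0 π Phat 0) (nu ρ0 π P 0) = 0 := tv_self _
  simpa only [hstart, zero_add] using hbound

lemma abs_J_sub_J_le (hR : ∀ sa, |R sa| ≤ Rmax) (hγ0 : 0 ≤ γ) (hγ1 : γ < 1)
    (ρ0 ρ0' : PMF S) (π π' : S → PMF A) (P P' : S × A → PMF S) :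
    |J R γ ρ0 π P - J R γ ρ0' π' P'| ≤
      2 * Rmax * ∑' t, γ ^ t * tv (nu ρ0 π P t) (nu ρ0' π' P' t) := by
  have hJ (ρ : PMF S) (σ : S → PMF A) (Q : S × A → PMF S) :
      HasSum (fun t => γ ^ t * expect (nu ρ σ Q t) R) (J R γ ρ σ Q) :=
    (summable_pow_mul_of_abs_le hγ0 hγ1 fun t => abs_expect_le _ hR).hasSum
  have htv : Summable fun t => γ ^ t * tv (nu ρ0 π P t) (nu ρ0' π' P' t) :=
    summable_pow_mul_of_abs_le hγ0 hγ1 fun t => abs_tv_le_one _ _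
  refine ((hJ ρ0 π P).sub (hJ ρ0' π' P')).norm_le_of_bounded
    (htv.hasSum.mul_left (2 * Rmax)) fun t => ?_
  rw [← mul_sub, Real.norm_eq_abs, abs_mul, abs_of_nonneg (pow_nonneg hγ0 t),
    mul_left_comm (2 * Rmax)]
  gcongr
  exact abs_expect_sub_expect_le _ _ hR

theorem return_gap_model_error_general (hR : ∀ sa, |R sa| ≤ Rmax) (hγ0 : 0 ≤ γ) (hγ1 : γ < 1)
    (ρ0 : PMF S) (π : S → PMF A) (Phat P : S × A → PMF S) :
    |J R γ ρ0 π Phat - J R γ ρ0 π P| ≤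
      2 * Rmax / (1 - γ) * ∑' t, γ ^ (t + 1) * modelError ρ0 π Phat P t := by
  have hRmax : 0 ≤ Rmax := (abs_nonneg _).trans (abs_expect_le (nu ρ0 π P 0) hR)
  have hγ : 0 < 1 - γ := sub_pos.mpr hγ1
  calc |J R γ ρ0 π Phat - J R γ ρ0 π P|
      ≤ 2 * Rmax * ∑' t, γ ^ t * tv (nu ρ0 π Phat t) (nu ρ0 π P t) :=
        abs_J_sub_J_le hR hγ0 hγ1 ρ0 ρ0 π π Phat P
    _ = 2 * Rmax / (1 - γ) *
          ((1 - γ) * ∑' t, γ ^ t * tv (nu ρ0 π Phat t) (nu ρ0 π P t)) := by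
        field_simp
    _ ≤ 2 * Rmax / (1 - γ) * ∑' t, γ ^ (t + 1) * modelError ρ0 π Phat P t := by
        gcongr
        exact one_sub_mul_tsum_pow_mul_tv_nu_le hγ0 hγ1 ρ0 π Phat P

end Return

/-- **Return gap from accumulated model error, same policy.**
`|J_{P̂}(π) - J_P(π)| ≤ (2·R_max/(1-γ))·Σ_{t≥1} γ^t·ε_t^m`. -/
theorem return_gap_model_error {S A : Type*} [Countable S] [Countable A]
    (P Phat : S × A → PMF S) (π : S → PMF A)
    (R : S × A → ℝ) (Rmax : ℝ) (hR : ∀ sa : S × A, |R sa| ≤ Rmax)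
    (γ : ℝ) (hγ0 : 0 ≤ γ) (hγ1 : γ < 1) (ρ0 : PMF S)
    (εm : ℕ → ℝ)
    (hεm : ∀ t : ℕ, εm (t + 1) =
      ∑' sa : S × A, ((nu ρ0 π Phat t) sa).toReal * tv (Phat sa) (P sa)) :
    |J R γ ρ0 π Phat - J R γ ρ0 π P| ≤
      2 * Rmax / (1 - γ) * ∑' t : ℕ, γ ^ (t + 1) * εm (t + 1) := by
  simp only [hεm]
  exact return_gap_model_error_general hR hγ0 hγ1 ρ0 π Phat P
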